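/- arXiv:1510.09127 — 4 statements merged into one kernel-verified Lean document; each statement's English description precedes it below -/
import Mathlib

section
/- Let M, n, m be positive natural numbers, T > 0, U ⊆ ℝ^m a compact set, and for each i ∈ {1,…,M} let f_i : ℝⁿ × ℝ^m → ℝⁿ and d_i : ℝⁿ → ℝ^{q_i} be continuous. Let u : [0,T] → U be measurable and let x : [0,T] → ℝⁿ be continuous, differentiable almost everywhere with (measurable) derivative ẋ. Then the following are equivalent: (a) for almost every t ∈ [0,T] there exists i ∈ {1,…,M} such that ẋ(t) = f_i(x(t), u(t)) and every component of d_i(x(t)) is ≤ 0; (b) there exists a measurable function ω : [0,T] → ℝ^M with ω(t) ∈ Σ_p^M for almost every t, such that for almost every t ∈ [0,T], ẋ(t) = Σ_{i=1}^M ω_i(t) f_i(x(t), u(t)) and for every i ∈ {1,…,M}, every component of ω_i(t)·d_i(x(t)) is ≤ 0. -/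
open MeasureTheory

/-!
An indexing function with values in the corners of the simplex is the same thing as a choice of one
mode at each time, so the only content beyond bookkeeping is that the mode can be chosen measurably.
The set of times at which mode `i` is admissible is measurable, since `x'` and `u` are measurable,
`f i` and `d i` are continuous, and `x` agrees on `[0, T]` with a continuous function on `ℝ`. There
are finitely many modes, so selecting the least admissible one yields a measurable function.
-/

/-- For finitely many measurable sets `A i`, there is a measurable `ω` which, at each point of
`⋃ i, A i`, is the indicator vector of a single index `i` with `t ∈ A i` (the least one). -/
lemma exists_measurable_selector {M : ℕ} (A : Fin M → Set ℝ) (hA : ∀ i, MeasurableSet (A i)) :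
    ∃ ω : ℝ → Fin M → ℝ, Measurable ω ∧
      ∀ t, (∃ i, t ∈ A i) → ∃ i, t ∈ A i ∧ ω t = Pi.single i 1 := by
  classical
  refine ⟨fun t i => (A i \ ⋃ k, ⋃ (_ : k < i), A k).indicator (fun _ => (1 : ℝ)) t, ?_, ?_⟩
  · refine measurable_pi_lambda _ fun i => measurable_const.indicator ?_
    exact (hA i).diff (MeasurableSet.iUnion fun k => MeasurableSet.iUnion fun _ => hA k)
  · intro t ht
    obtain ⟨i, hi, hmin⟩ := WellFounded.has_min (wellFounded_lt (α := Fin M)) {i | t ∈ A i} ht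
    refine ⟨i, hi, funext fun k => ?_⟩
    have hmin' : ∀ k < i, t ∉ A k := fun k hk hkA => hmin k hkA hk
    rcases lt_trichotomy k i with h | rfl | h
    · simp [Set.indicator, hmin' k h, h.ne]
    · have : t ∈ A k := hi
      simpa [Set.indicator, this] using hmin'
    · have : t ∈ A i := hi
      simp only [Set.indicator, Set.mem_sdiff, Set.mem_iUnion, Pi.single_eq_of_ne h.ne']
      exact if_neg fun hk => hk.2 ⟨i, h, this⟩

/-- Proposition 1 of the paper. A pair `(x,u)` is a hybrid execution
(for a.e. `t` there is a mode `i` with `ẋ(t) = f_i(x(t),u(t))` and `d_i(x(t)) ≤ 0`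
componentwise) if and only if there is a measurable indexing function `ω` taking
values in the corners `Σ_p^M` of the `M`-simplex a.e. such that
`ẋ(t) = ∑ᵢ ωᵢ(t) fᵢ(x(t),u(t))` and `ωᵢ(t) dᵢ(x(t)) ≤ 0` componentwise, a.e. on `[0,T]`. -/
theorem stmt0 (M n m : ℕ) (hM : 0 < M) (hn : 0 < n) (hm : 0 < m)
    (T : ℝ) (hT : 0 < T)
    (U : Set (EuclideanSpace ℝ (Fin m))) (hU : IsCompact U)
    (q : Fin M → ℕ)
    (f : Fin M → EuclideanSpace ℝ (Fin n) → EuclideanSpace ℝ (Fin m) →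
      EuclideanSpace ℝ (Fin n))
    (hfc : ∀ i, Continuous fun p : EuclideanSpace ℝ (Fin n) × EuclideanSpace ℝ (Fin m) =>
      f i p.1 p.2)
    (d : (i : Fin M) → EuclideanSpace ℝ (Fin n) → EuclideanSpace ℝ (Fin (q i)))
    (hdc : ∀ i, Continuous (d i))
    (u : ℝ → EuclideanSpace ℝ (Fin m)) (hum : Measurable u)
    (huU : ∀ t ∈ Set.Icc (0:ℝ) T, u t ∈ U)
    (x : ℝ → EuclideanSpace ℝ (Fin n)) (hxc : ContinuousOn x (Set.Icc 0 T))
    (x' : ℝ → EuclideanSpace ℝ (Fin n)) (hx'm : Measurable x')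
    (hdiff : ∀ᵐ t ∂(volume.restrict (Set.Icc (0:ℝ) T)), HasDerivAt x (x' t) t) :
    (∀ᵐ t ∂(volume.restrict (Set.Icc (0:ℝ) T)), ∃ i : Fin M,
        x' t = f i (x t) (u t) ∧ ∀ j : Fin (q i), d i (x t) j ≤ 0) ↔
    (∃ ω : ℝ → Fin M → ℝ, Measurable ω ∧
      ∀ᵐ t ∂(volume.restrict (Set.Icc (0:ℝ) T)),
        (∑ i, ω t i = 1 ∧ ∀ i, ω t i = 0 ∨ ω t i = 1) ∧
        x' t = ∑ i, ω t i • f i (x t) (u t) ∧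
        ∀ (i : Fin M) (j : Fin (q i)), ω t i * d i (x t) j ≤ 0) := by
  constructor
  · intro h
    -- `x` is controlled only on `[0, T]`; off it, the clamped extension `y` replaces it.
    set y : ℝ → EuclideanSpace ℝ (Fin n) := Set.IccExtend hT.le ((Set.Icc 0 T).domRestrict x)
    have hyc : Continuous y := hxc.domRestrict.Icc_extend'
    have hyx : ∀ t ∈ Set.Icc (0 : ℝ) T, y t = x t := fun t ht => Set.IccExtend_of_mem hT.le _ ht
    obtain ⟨ω, hω, hsel⟩ := exists_measurable_selector
      (fun i => {t | x' t = f i (y t) (u t) ∧ ∀ j : Fin (q i), d i (y t) j ≤ 0}) (by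
        intro i
        have hd : MeasurableSet {t | ∀ j : Fin (q i), d i (y t) j ≤ 0} := by
          rw [Set.ofPred_forall]
          refine MeasurableSet.iInter fun j => ?_
          have hdi := (hdc i).comp hyc
          have hdj : Continuous fun t => d i (y t) j := by fun_prop
          exact measurableSet_le hdj.measurable measurable_const
        exact (measurableSet_eq_fun hx'm
          ((hfc i).measurable.comp (hyc.measurable.prodMk hum))).inter hd)
    refine ⟨ω, hω, ?_⟩
    filter_upwards [h, ae_restrict_mem measurableSet_Icc] with t ht htI
    obtain ⟨i, ⟨hi, hdi⟩, hωt⟩ := hsel t (by simpa only [Set.mem_ofPred_eq, hyx t htI] using ht)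
    rw [hyx t htI] at hi hdi
    rw [hωt]
    refine ⟨⟨by simp, fun k => ?_⟩, ?_, fun k j => ?_⟩
    · by_cases hk : k = i
      · subst hk; simp
      · simp [hk]
    · simpa [Pi.single_apply] using hi
    · by_cases hk : k = i
      · subst hk; simpa using hdi j
      · simp [hk]
  · rintro ⟨ω, -, h⟩
    filter_upwards [h] with t ht
    obtain ⟨⟨hsum, h01⟩, hx, hd⟩ := ht
    obtain ⟨i, hi⟩ : ∃ i, ω t i = 1 := by
      by_contra! hne
      simp [fun i => (h01 i).resolve_right (hne i)] at hsum
    -- The entries are nonnegative with sum `1`, so those off `i` vanish.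
    have h0 : ∀ k, k ≠ i → ω t k = 0 := by
      have hnn : ∀ k, 0 ≤ ω t k := fun k => by rcases h01 k with h | h <;> simp [h]
      have hrest : ∑ k ∈ Finset.univ.erase i, ω t k = 0 := by
        have := Finset.add_sum_erase Finset.univ (ω t) (Finset.mem_univ i)
        linarith
      intro k hk
      exact (Finset.sum_eq_zero_iff_of_nonneg fun k _ => hnn k).1 hrest k (by simp [hk])
    refine ⟨i, ?_, fun j => by simpa [hi] using hd i j⟩
    rw [hx, Finset.sum_eq_single i (fun k _ hk => by simp [h0 k hk]) (by simp), hi, one_smul]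
end

section
/- Let M be a positive natural number, T > 0, N ∈ ℕ, and let η : [0,T] → ℝ^M satisfy η(t_k) ∈ Σ_r^M for every sample time t_k = kT/2^N, k ∈ {0,…,2^N−1}. Then for every t ∈ [0,T), the vector P_N(η)(t) belongs to Σ_p^M; that is, there is exactly one i ∈ {1,…,M} with [P_N(η)]_i(t) = 1, and [P_N(η)]_j(t) = 0 for all j ≠ i. -/
/-!
For fixed `k` the partial sums `S_{k,i}` increase in `i` from `kT/2^N` (at `i = 0`) to
`(k+1)T/2^N` (at `i = M`), so the pulses `[S_{k,i}, S_{k,i+1})` partition the `k`-th sampling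
interval, and the sampling intervals partition `[0,T)`. Hence each `t` lies in exactly one pulse:
`exists_pulse` gives existence and `pulse_unique` uniqueness.
-/

/-- Partial sums `S_{k,i} = (T/2^N) (k + ∑_{j=1}^{i} η_j(kT/2^N))` used in the
pulse-width modulation operator (here `i : ℕ` counts how many coordinates are summed,
coordinates being indexed by `Fin M`). -/
noncomputable def pwmPartial (M : ℕ) (T : ℝ) (N : ℕ) (η : ℝ → Fin M → ℝ)
    (k i : ℕ) : ℝ :=
  (T / 2 ^ N) *
    (k + ∑ j ∈ Finset.univ.filter (fun j : Fin M => (j : ℕ) < i), η (k * T / 2 ^ N) j)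

/-- The pulse-width modulation operator: `[P_N(η)]_i(t) = 1` iff
`t ∈ [S_{k,i-1}, S_{k,i})` for some `k ∈ {0,…,2^N-1}` (with `i : Fin M` zero-based,
so the pulse for coordinate `i` is `[S_{k,i}, S_{k,i+1})` in zero-based partial sums). -/
noncomputable def pwm (M : ℕ) (T : ℝ) (N : ℕ) (η : ℝ → Fin M → ℝ)
    (t : ℝ) (i : Fin M) : ℝ :=
  if ∃ k : ℕ, k < 2 ^ N ∧
      t ∈ Set.Ico (pwmPartial M T N η k i) (pwmPartial M T N η k (i + 1)) then 1 else 0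

section PulsePartition

variable {M : ℕ} {T : ℝ} {N : ℕ} {η : ℝ → Fin M → ℝ} {k : ℕ}

theorem pwmPartial_zero : pwmPartial M T N η k 0 = (T / 2 ^ N) * k := by
  simp [pwmPartial]

theorem pwmPartial_top (h : ∑ i, η (k * T / 2 ^ N) i = 1) :
    pwmPartial M T N η k M = (T / 2 ^ N) * (k + 1) := by
  simp [pwmPartial, h]

theorem pwmPartial_mono (hT : 0 < T) (h : ∀ i, 0 ≤ η (k * T / 2 ^ N) i) :
    Monotone (pwmPartial M T N η k) := by
  intro a b hab
  unfold pwmPartial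
  gcongr
  exact fun j _ _ => h j

/-- Each pulse belonging to `k` lies inside the `k`-th sampling interval. -/
theorem pulse_bounds (hT : 0 < T) (hs : ∑ i, η (k * T / 2 ^ N) i = 1)
    (h : ∀ i, 0 ≤ η (k * T / 2 ^ N) i) {t : ℝ} {i : Fin M}
    (ht : t ∈ Set.Ico (pwmPartial M T N η k i) (pwmPartial M T N η k (i + 1))) :
    (T / 2 ^ N) * k ≤ t ∧ t < (T / 2 ^ N) * (k + 1) := by
  constructor
  · rw [← pwmPartial_zero (η := η)]
    exact (pwmPartial_mono hT h (Nat.zero_le _)).trans ht.1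
  · rw [← pwmPartial_top hs]
    exact ht.2.trans_le (pwmPartial_mono hT h i.2)

theorem pulse_unique (hT : 0 < T)
    (hη : ∀ k : ℕ, k < 2 ^ N →
      ∑ i, η (k * T / 2 ^ N) i = 1 ∧ ∀ i, η (k * T / 2 ^ N) i ∈ Set.Icc (0:ℝ) 1)
    {t : ℝ} {l : ℕ} {i j : Fin M} (hk : k < 2 ^ N) (hl : l < 2 ^ N)
    (hi : t ∈ Set.Ico (pwmPartial M T N η k i) (pwmPartial M T N η k (i + 1)))
    (hj : t ∈ Set.Ico (pwmPartial M T N η l j) (pwmPartial M T N η l (j + 1))) :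
    i = j := by
  have hc : 0 < T / 2 ^ N := by positivity
  have bk := pulse_bounds hT (hη k hk).1 (fun i => ((hη k hk).2 i).1) hi
  have bl := pulse_bounds hT (hη l hl).1 (fun i => ((hη l hl).2 i).1) hj
  have h1 : (k : ℝ) < l + 1 := lt_of_mul_lt_mul_left (bk.1.trans_lt bl.2) hc.le
  have h2 : (l : ℝ) < k + 1 := lt_of_mul_lt_mul_left (bl.1.trans_lt bk.2) hc.le
  norm_cast at h1 h2
  obtain rfl : k = l := by omega
  have hm := pwmPartial_mono hT (fun i => ((hη k hk).2 i).1)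
  have h3 := hm.reflect_lt (hi.1.trans_lt hj.2)
  have h4 := hm.reflect_lt (hj.1.trans_lt hi.2)
  exact Fin.ext (by omega)

theorem exists_pulse (hT : 0 < T)
    (hη : ∀ k : ℕ, k < 2 ^ N →
      ∑ i, η (k * T / 2 ^ N) i = 1 ∧ ∀ i, η (k * T / 2 ^ N) i ∈ Set.Icc (0:ℝ) 1)
    {t : ℝ} (ht : t ∈ Set.Ico (0:ℝ) T) :
    ∃ i : Fin M, ∃ k : ℕ, k < 2 ^ N ∧
      t ∈ Set.Ico (pwmPartial M T N η k i) (pwmPartial M T N η k (i + 1)) := by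
  classical
  have hc : 0 < T / 2 ^ N := by positivity
  have hq : 0 ≤ t / (T / 2 ^ N) := div_nonneg ht.1 hc.le
  obtain ⟨k, hkdef⟩ : ∃ k, k = ⌊t / (T / 2 ^ N)⌋₊ := ⟨_, rfl⟩
  have hlo : (T / 2 ^ N) * k ≤ t := by
    have := Nat.floor_le hq
    rw [← hkdef, le_div_iff₀ hc] at this
    linarith
  have hhi : t < (T / 2 ^ N) * (k + 1) := by
    have := Nat.lt_floor_add_one (t / (T / 2 ^ N))
    rw [← hkdef, div_lt_iff₀ hc] at this
    linarith
  have hk : k < 2 ^ N := by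
    have h1 : (T / 2 ^ N) * k < (T / 2 ^ N) * 2 ^ N := by
      rw [div_mul_cancel₀ T (by positivity)]
      exact hlo.trans_lt ht.2
    exact_mod_cast lt_of_mul_lt_mul_left h1 hc.le
  have hex : ∃ n, t < pwmPartial M T N η k n := ⟨M, by rwa [pwmPartial_top (hη k hk).1]⟩
  -- The pulse containing `t` ends at the first partial sum exceeding `t`.
  have hspec := Nat.find_spec hex
  have hle : Nat.find hex ≤ M := Nat.find_min' hex (by rwa [pwmPartial_top (hη k hk).1])
  have hmin : ∀ m < Nat.find hex, pwmPartial M T N η k m ≤ t :=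
    fun m hm => not_lt.1 (Nat.find_min hex hm)
  generalize Nat.find hex = n at hspec hle hmin
  cases n with
  | zero =>
    rw [pwmPartial_zero] at hspec
    exact absurd hspec (not_lt.2 hlo)
  | succ n => exact ⟨⟨n, hle⟩, k, hk, hmin n n.lt_succ_self, hspec⟩

end PulsePartition

/-- If `η` takes values in the simplex `Σ_r^M` at every sample time
`kT/2^N`, then for every `t ∈ [0,T)` the vector `P_N(η)(t)` lies in the set of corners
`Σ_p^M`; in particular there is exactly one coordinate `i` with `[P_N(η)]_i(t) = 1`,
and all other coordinates vanish. -/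
theorem stmt5 (M : ℕ) (hM : 0 < M) (T : ℝ) (hT : 0 < T) (N : ℕ)
    (η : ℝ → Fin M → ℝ)
    (hη : ∀ k : ℕ, k < 2 ^ N →
      ∑ i, η (k * T / 2 ^ N) i = 1 ∧ ∀ i, η (k * T / 2 ^ N) i ∈ Set.Icc (0:ℝ) 1) :
    ∀ t ∈ Set.Ico (0:ℝ) T,
      (∑ i, pwm M T N η t i = 1 ∧ ∀ i, pwm M T N η t i = 0 ∨ pwm M T N η t i = 1) ∧
      ∃! i : Fin M, pwm M T N η t i = 1 ∧ ∀ j, j ≠ i → pwm M T N η t j = 0 := by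
  intro t ht
  obtain ⟨i, k, hk, hi⟩ := exists_pulse hT hη ht
  have h1 : pwm M T N η t i = 1 := if_pos ⟨k, hk, hi⟩
  have h0 : ∀ j, j ≠ i → pwm M T N η t j = 0 := by
    intro j hj
    refine if_neg ?_
    rintro ⟨l, hl, hjl⟩
    exact hj (pulse_unique hT hη hl hk hjl hi)
  refine ⟨⟨?_, fun j => ?_⟩, i, ⟨h1, h0⟩, fun j hj => ?_⟩
  · rw [Finset.sum_eq_single i (fun j _ hj => h0 j hj) (by simp), h1]
  · by_cases hj : j = i
    · exact Or.inr (hj ▸ h1)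
    · exact Or.inl (h0 j hj)
  · by_contra hne
    exact zero_ne_one ((h0 j hne).symm.trans hj.1)
end

section
/- Let M be a positive natural number, T > 0, N ∈ ℕ, and let η : [0,T] → ℝ^M satisfy η(t_k) ∈ Σ_r^M for every sample time t_k = kT/2^N, k ∈ {0,…,2^N−1}. Then for every k ∈ {0,…,2^N−1} and every i ∈ {1,…,M}, ∫_{kT/2^N}^{(k+1)T/2^N} [P_N(η)]_i(t) dt = (T/2^N) · η_i(t_k). -/
lemma pwmPartial_succ (M : ℕ) (T : ℝ) (N : ℕ) (η : ℝ → Fin M → ℝ) (k : ℕ) (i : Fin M) :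
    pwmPartial M T N η k (i + 1) =
      pwmPartial M T N η k i + (T / 2 ^ N) * η (k * T / 2 ^ N) i := by
  have h : Finset.univ.filter (fun j : Fin M => (j : ℕ) < i + 1) =
      insert i (Finset.univ.filter (fun j : Fin M => (j : ℕ) < i)) := by
    ext j
    simp only [Finset.mem_filter, Finset.mem_univ, true_and, Finset.mem_insert, Fin.ext_iff]
    omega
  unfold pwmPartial
  rw [h, Finset.sum_insert (by simp)]
  ring

lemma pwmPartial_ge (M : ℕ) (T : ℝ) (hT : 0 < T) (N : ℕ) (η : ℝ → Fin M → ℝ) (k i : ℕ)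
    (h0 : ∀ j, 0 ≤ η (k * T / 2 ^ N) j) :
    (T / 2 ^ N) * k ≤ pwmPartial M T N η k i := by
  unfold pwmPartial
  have := Finset.sum_nonneg
    (s := Finset.univ.filter (fun j : Fin M => (j : ℕ) < i)) (fun j _ => h0 j)
  gcongr
  linarith

lemma pwmPartial_le (M : ℕ) (T : ℝ) (hT : 0 < T) (N : ℕ) (η : ℝ → Fin M → ℝ) (k i : ℕ)
    (h0 : ∀ j, 0 ≤ η (k * T / 2 ^ N) j) (h1 : ∑ j, η (k * T / 2 ^ N) j = 1) :
    pwmPartial M T N η k i ≤ (T / 2 ^ N) * (k + 1) := by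
  unfold pwmPartial
  have := Finset.sum_le_sum_of_subset_of_nonneg
    (Finset.filter_subset (fun j : Fin M => (j : ℕ) < i) Finset.univ) (fun j _ _ => h0 j)
  gcongr
  linarith

/-- The averaging property of pulse-width modulation: if `η` takes values
in the simplex `Σ_r^M` at every sample time `kT/2^N`, then on each dyadic subinterval
`[kT/2^N, (k+1)T/2^N]` the time integral of `[P_N(η)]_i` equals `(T/2^N) η_i(kT/2^N)`. -/
theorem stmt6 (M : ℕ) (hM : 0 < M) (T : ℝ) (hT : 0 < T) (N : ℕ)
    (η : ℝ → Fin M → ℝ)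
    (hη : ∀ k : ℕ, k < 2 ^ N →
      ∑ i, η (k * T / 2 ^ N) i = 1 ∧ ∀ i, η (k * T / 2 ^ N) i ∈ Set.Icc (0:ℝ) 1) :
    ∀ k : ℕ, k < 2 ^ N → ∀ i : Fin M,
      ∫ t in (k * T / 2 ^ N)..((k + 1) * T / 2 ^ N), pwm M T N η t i
        = (T / 2 ^ N) * η (k * T / 2 ^ N) i := by
  intro k hk i
  have hh : 0 < T / 2 ^ N := by positivity
  have hge : ∀ k' : ℕ, k' < 2 ^ N → ∀ j, (T / 2 ^ N) * k' ≤ pwmPartial M T N η k' j :=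
    fun k' hk' j => pwmPartial_ge M T hT N η k' j (fun l => ((hη k' hk').2 l).1)
  have hle : ∀ k' : ℕ, k' < 2 ^ N → ∀ j, pwmPartial M T N η k' j ≤ (T / 2 ^ N) * (k' + 1) :=
    fun k' hk' j =>
      pwmPartial_le M T hT N η k' j (fun l => ((hη k' hk').2 l).1) (hη k' hk').1
  have ea : (k : ℝ) * T / 2 ^ N = (T / 2 ^ N) * k := by ring
  have eb : ((k : ℝ) + 1) * T / 2 ^ N = (T / 2 ^ N) * (k + 1) := by ring
  have hab : (k : ℝ) * T / 2 ^ N ≤ (k + 1) * T / 2 ^ N := by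
    rw [ea, eb]; gcongr; linarith
  have hcongr : Set.EqOn (fun t => pwm M T N η t i)
      ((Set.Ico (pwmPartial M T N η k i) (pwmPartial M T N η k (i + 1))).indicator
        (fun _ => (1 : ℝ)))
      (Set.Ico (k * T / 2 ^ N) ((k + 1) * T / 2 ^ N)) := by
    intro t ht
    rw [ea, eb] at ht
    simp only [pwm, Set.indicator_apply]
    refine if_congr ⟨?_, fun h => ⟨k, hk, h⟩⟩ rfl rfl
    -- `t` lies in the `k`-th cell and in the cell of the pulse containing it, so the two
    -- cell indices agree.
    rintro ⟨k', hk', h⟩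
    have h1 : (k' : ℝ) < k + 1 :=
      lt_of_mul_lt_mul_left (((hge k' hk' i).trans h.1).trans_lt ht.2) hh.le
    have h2 : (k : ℝ) < k' + 1 :=
      lt_of_mul_lt_mul_left ((ht.1.trans_lt h.2).trans_le (hle k' hk' (i + 1))) hh.le
    have h3 : k' < k + 1 := by exact_mod_cast h1
    have h4 : k < k' + 1 := by exact_mod_cast h2
    obtain rfl : k' = k := by omega
    exact h
  have hsub : Set.Ico (pwmPartial M T N η k i) (pwmPartial M T N η k (i + 1)) ⊆
      Set.Ico (k * T / 2 ^ N) ((k + 1) * T / 2 ^ N) := by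
    rw [ea, eb]
    exact Set.Ico_subset_Ico (hge k hk i) (hle k hk (i + 1))
  rw [intervalIntegral.integral_of_le hab, ← MeasureTheory.integral_Ico_eq_integral_Ioc,
    MeasureTheory.setIntegral_congr_fun measurableSet_Ico hcongr,
    MeasureTheory.setIntegral_indicator measurableSet_Ico, Set.inter_eq_self_of_subset_right hsub]
  have hη0 : 0 ≤ η (k * T / 2 ^ N) i := ((hη k hk).2 i).1
  rw [MeasureTheory.setIntegral_const, Real.volume_real_Ico_of_le, pwmPartial_succ]
  · simp
  · rw [pwmPartial_succ]
    exact le_add_of_nonneg_right (mul_nonneg hh.le hη0)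
end

section
/- Let T > 0, N ∈ ℕ, and let g : [0,T] → ℝ be integrable. Then for every j ∈ {0,…,2^{N+1}−1} and every t ∈ [jT/2^{N+1}, (j+1)T/2^{N+1}), F_N(g)(t) = (2^{N+1}/T) · ∫_{jT/2^{N+1}}^{(j+1)T/2^{N+1}} g(s) ds. In particular, F_N(g) is constant on each interval of the uniform dyadic partition of [0,T] into 2^{N+1} pieces, and equals the average of g on that interval. -/
/-!
Induction on the number `M` of Haar levels: adding the mean of `g` and the levels `k < M` gives,
on each dyadic interval of length `T / 2 ^ M`, the average of `g` over that interval
(`haar_partial_sum`). For the inductive step, only one Haar function of level `M` is nonzero at a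
given point `t`, namely the one whose support `I` contains `t`. Its coefficient is `2 ^ M / T` times
`L - R`, where `L` and `R` are the integrals of `g` over the left and right halves of `I`
(`integral_mul_haarFn`). The previous levels contribute `2 ^ M / T * (L + R)`, so the total is
`2 ^ (M + 1) / T` times `L` or `R`, according to the half that contains `t`.
-/

/-- The mother Haar function on `[0,T]`: `1` on `[0,T/2)`, `-1` on `[T/2,T)`, `0` otherwise. -/
noncomputable def haarMother (T t : ℝ) : ℝ :=
  if 0 ≤ t ∧ t < T / 2 then 1 else if T / 2 ≤ t ∧ t < T then -1 else 0

/-- The Haar function `b_{k,j}(t) = b_{0,0}(2^k t - j T)` on `[0,T]`. -/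
noncomputable def haarFn (T : ℝ) (k j : ℕ) (t : ℝ) : ℝ :=
  haarMother T (2 ^ k * t - j * T)

/-- The Haar wavelet operator
`F_N(g)(t) = (1/T) ∫₀ᵀ g + ∑_{k=0}^{N} ∑_{j=0}^{2^k-1} (2^k/T) (∫₀ᵀ g b_{k,j}) b_{k,j}(t)`. -/
noncomputable def haarOp (T : ℝ) (N : ℕ) (g : ℝ → ℝ) (t : ℝ) : ℝ :=
  (1 / T) * (∫ s in (0:ℝ)..T, g s) +
    ∑ k ∈ Finset.range (N + 1), ∑ j ∈ Finset.range (2 ^ k),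
      (2 ^ k / T) * (∫ s in (0:ℝ)..T, g s * haarFn T k j s) * haarFn T k j t

section HaarAux

variable {T : ℝ} {k j : ℕ} {t : ℝ}

lemma haarFn_eq_one (h1 : j * T / 2 ^ k ≤ t) (h2 : t < (2 * j + 1) * T / 2 ^ (k + 1)) :
    haarFn T k j t = 1 := by
  rw [div_le_iff₀ (by positivity)] at h1
  rw [lt_div_iff₀ (by positivity), pow_succ] at h2
  unfold haarFn haarMother
  rw [if_pos ⟨by linarith, by linarith⟩]

lemma haarFn_eq_neg_one (h1 : (2 * j + 1) * T / 2 ^ (k + 1) ≤ t)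
    (h2 : t < (j + 1) * T / 2 ^ k) : haarFn T k j t = -1 := by
  rw [div_le_iff₀ (by positivity), pow_succ] at h1
  rw [lt_div_iff₀ (by positivity)] at h2
  unfold haarFn haarMother
  rw [if_neg (fun h => by linarith [h.2]), if_pos ⟨by linarith, by linarith⟩]

lemma haarFn_eq_zero_of_lt (hT : 0 < T) (h : t < j * T / 2 ^ k) : haarFn T k j t = 0 := by
  rw [lt_div_iff₀ (by positivity)] at h
  unfold haarFn haarMother
  rw [if_neg (fun h => by linarith [h.1]), if_neg (fun h => by linarith [h.1])]

lemma haarFn_eq_zero_of_ge (hT : 0 < T) (h : (j + 1) * T / 2 ^ k ≤ t) :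
    haarFn T k j t = 0 := by
  rw [div_le_iff₀ (by positivity)] at h
  unfold haarFn haarMother
  rw [if_neg (fun h => by linarith [h.2]), if_neg (fun h => by linarith [h.2])]

/-- At level `k`, only the Haar function supported on the interval containing `t` is nonzero
at `t`. -/
lemma haarFn_eq_zero_of_ne (hT : 0 < T) {i : ℕ} (hij : i ≠ j)
    (ht : t ∈ Set.Ico (j * T / 2 ^ k) ((j + 1) * T / 2 ^ k)) : haarFn T k i t = 0 := by
  rcases lt_or_gt_of_ne hij with h | h
  · have h' : (i : ℝ) + 1 ≤ j := by exact_mod_cast h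
    exact haarFn_eq_zero_of_ge hT (le_trans (by gcongr) ht.1)
  · have h' : (j : ℝ) + 1 ≤ i := by exact_mod_cast h
    exact haarFn_eq_zero_of_lt hT (lt_of_lt_of_le ht.2 (by gcongr))

/-- The endpoints of an interval may be ignored, which lets half-open pieces be treated like
open ones. -/
lemma integral_mul_of_eq_const {g h : ℝ → ℝ} {a b c : ℝ} (hab : a ≤ b)
    (hg : IntervalIntegrable g MeasureTheory.volume a b) (hc : ∀ s ∈ Set.Ioo a b, h s = c) :
    IntervalIntegrable (fun s => g s * h s) MeasureTheory.volume a b ∧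
      ∫ s in a..b, g s * h s = (∫ s in a..b, g s) * c := by
  have heq : Set.EqOn (fun s => g s * c) (fun s => g s * h s) (Set.Ioo a b) :=
    fun s hs => by simp only [hc s hs]
  refine ⟨(hg.mul_const c).congr_uIoo (by rwa [Set.uIoo_of_le hab]), ?_⟩
  rw [← intervalIntegral.integral_congr_Ioo_of_le hab heq, intervalIntegral.integral_mul_const]

lemma integral_mul_haarFn (hT : 0 < T) {g : ℝ → ℝ}
    (hg : MeasureTheory.IntegrableOn g (Set.Icc 0 T)) (hj : j < 2 ^ k) :
    ∫ s in (0:ℝ)..T, g s * haarFn T k j s =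
      (∫ s in (j * T / 2 ^ k)..((2 * j + 1) * T / 2 ^ (k + 1)), g s) -
        ∫ s in ((2 * j + 1) * T / 2 ^ (k + 1))..((j + 1) * T / 2 ^ k), g s := by
  have hj' : (j : ℝ) + 1 ≤ 2 ^ k := by exact_mod_cast hj
  have h0a : 0 ≤ j * T / 2 ^ k := by positivity
  have ham : j * T / 2 ^ k ≤ (2 * j + 1) * T / 2 ^ (k + 1) := by
    rw [div_le_div_iff₀ (by positivity) (by positivity), pow_succ]
    nlinarith [mul_pos hT (show (0 : ℝ) < 2 ^ k by positivity)]
  have hmb : (2 * j + 1) * T / 2 ^ (k + 1) ≤ (j + 1) * T / 2 ^ k := by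
    rw [div_le_div_iff₀ (by positivity) (by positivity), pow_succ]
    nlinarith [mul_pos hT (show (0 : ℝ) < 2 ^ k by positivity)]
  have hbT : (j + 1) * T / 2 ^ k ≤ T := by
    rw [div_le_iff₀ (by positivity)]
    nlinarith
  have hI : ∀ u v : ℝ, 0 ≤ u → u ≤ v → v ≤ T →
      IntervalIntegrable g MeasureTheory.volume u v := fun u v hu huv hv =>
    (intervalIntegrable_iff_integrableOn_Icc_of_le huv).2 (hg.mono_set (Set.Icc_subset_Icc hu hv))
  obtain ⟨i1, e1⟩ := integral_mul_of_eq_const (h := haarFn T k j) (c := 0) h0a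
    (hI _ _ le_rfl h0a (by linarith)) (fun s hs => haarFn_eq_zero_of_lt hT hs.2)
  obtain ⟨i2, e2⟩ := integral_mul_of_eq_const (h := haarFn T k j) (c := 1) ham
    (hI _ _ h0a ham (by linarith)) (fun s hs => haarFn_eq_one hs.1.le hs.2)
  obtain ⟨i3, e3⟩ := integral_mul_of_eq_const (h := haarFn T k j) (c := -1) hmb
    (hI _ _ (by linarith) hmb hbT) (fun s hs => haarFn_eq_neg_one hs.1.le hs.2)
  obtain ⟨i4, e4⟩ := integral_mul_of_eq_const (h := haarFn T k j) (c := 0) hbT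
    (hI _ _ (by linarith) hbT le_rfl) (fun s hs => haarFn_eq_zero_of_ge hT hs.1.le)
  rw [← intervalIntegral.integral_add_adjacent_intervals ((i1.trans i2).trans i3) i4,
    ← intervalIntegral.integral_add_adjacent_intervals (i1.trans i2) i3,
    ← intervalIntegral.integral_add_adjacent_intervals i1 i2, e1, e2, e3, e4]
  ring

/-- The sum of the mean and of the first `M` Haar levels, `k < M`. It includes the case `M = 0`
of the mean alone, which starts the induction and is not of the form `haarOp T N g`. -/
lemma haar_partial_sum (hT : 0 < T) {g : ℝ → ℝ}
    (hg : MeasureTheory.IntegrableOn g (Set.Icc 0 T)) (M : ℕ) :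
    ∀ j : ℕ, j < 2 ^ M → ∀ t ∈ Set.Ico (j * T / 2 ^ M) ((j + 1) * T / 2 ^ M),
      (1 / T) * (∫ s in (0:ℝ)..T, g s) +
        ∑ k ∈ Finset.range M, ∑ j ∈ Finset.range (2 ^ k),
          (2 ^ k / T) * (∫ s in (0:ℝ)..T, g s * haarFn T k j s) * haarFn T k j t
        = (2 ^ M / T) * ∫ s in (j * T / 2 ^ M)..((j + 1) * T / 2 ^ M), g s := by
  induction M with
  | zero =>
    intro j hj t _
    obtain rfl : j = 0 := by simpa using hj
    simp
  | succ M ih =>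
    intro j hj t ht
    -- `i` indexes the parent interval; `j` is `2 * i` (left half) or `2 * i + 1` (right half).
    obtain ⟨i, hi⟩ : ∃ i, j = 2 * i ∨ j = 2 * i + 1 := ⟨j / 2, by omega⟩
    have hiM : i < 2 ^ M := by
      rw [pow_succ] at hj
      omega
    have ha : (2 * i : ℝ) * T / 2 ^ (M + 1) = i * T / 2 ^ M := by
      rw [pow_succ]
      field_simp
    have hb : (2 * i + 1 + 1 : ℝ) * T / 2 ^ (M + 1) = (i + 1) * T / 2 ^ M := by
      rw [pow_succ]
      field_simp
      ring
    have ham : i * T / 2 ^ M ≤ (2 * i + 1) * T / 2 ^ (M + 1) := by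
      rw [← ha]
      gcongr
      linarith
    have hmb : (2 * i + 1) * T / 2 ^ (M + 1) ≤ (i + 1) * T / 2 ^ M := by
      rw [← hb]
      gcongr
      linarith
    have hti : t ∈ Set.Ico (i * T / 2 ^ M) ((i + 1) * T / 2 ^ M) := by
      rcases hi with rfl | rfl <;> push_cast at ht
      · rw [ha] at ht
        exact ⟨ht.1, ht.2.trans_le hmb⟩
      · rw [hb] at ht
        exact ⟨ham.trans ht.1, ht.2⟩
    have h0a : 0 ≤ i * T / 2 ^ M := by positivity
    have hbT : (i + 1) * T / 2 ^ M ≤ T := by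
      have : (i : ℝ) + 1 ≤ 2 ^ M := by exact_mod_cast hiM
      rw [div_le_iff₀ (by positivity)]
      nlinarith
    have hsplit := intervalIntegral.integral_add_adjacent_intervals
      ((intervalIntegrable_iff_integrableOn_Icc_of_le ham).2
        (hg.mono_set (Set.Icc_subset_Icc h0a (hmb.trans hbT))))
      ((intervalIntegrable_iff_integrableOn_Icc_of_le hmb).2
        (hg.mono_set (Set.Icc_subset_Icc (h0a.trans ham) hbT)))
    rw [Finset.sum_range_succ, ← add_assoc, ih i hiM t hti,
      Finset.sum_eq_single_of_mem i (Finset.mem_range.2 hiM)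
        (fun b _ hbi => by rw [haarFn_eq_zero_of_ne hT hbi hti, mul_zero]),
      integral_mul_haarFn hT hg hiM, ← hsplit]
    rcases hi with rfl | rfl <;> push_cast at ht ⊢
    · rw [ha] at ht ⊢
      rw [haarFn_eq_one ht.1 ht.2]
      ring
    · rw [hb] at ht ⊢
      rw [haarFn_eq_neg_one ht.1 ht.2]
      ring

end HaarAux

/-- `F_N(g)` is piecewise constant on the uniform dyadic partition of `[0,T]`
into `2^{N+1}` pieces, and on each such interval it equals the average of `g` there. -/
theorem stmt7 (T : ℝ) (hT : 0 < T) (N : ℕ) (g : ℝ → ℝ)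
    (hg : MeasureTheory.IntegrableOn g (Set.Icc 0 T)) :
    ∀ j : ℕ, j < 2 ^ (N + 1) →
      ∀ t ∈ Set.Ico (j * T / 2 ^ (N + 1)) ((j + 1) * T / 2 ^ (N + 1)),
        haarOp T N g t
          = (2 ^ (N + 1) / T) *
              ∫ s in (j * T / 2 ^ (N + 1))..((j + 1) * T / 2 ^ (N + 1)), g s := by
  exact haar_partial_sum hT hg (N + 1)
end
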